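/- For all integers k ≥ 5 and ℓ ≥ 3, there exists a finite oriented graph D with oriented chromatic number exactly k and girth exactly ℓ. -/

import Mathlib

/-!
Two vertices joined by an arc or by a directed path of length two have distinct images under every
homomorphism into an oriented graph. Deleting the arc from source to sink in a transitive tournament
on `k` vertices leaves the path of length two through any intermediate vertex, so this acyclic graph
still needs `k` colours; reversing that arc instead gives a colour graph with closed walks through
the source of lengths `3`, `4` and `5`, hence of every length at least `3`. The disjoint union of
the acyclic graph and a directed cycle of length `ℓ` is therefore `k`-colourable, and all its cycles
have length `ℓ`.
-/

/-- An oriented graph on vertex type `V`: a loopless digraph in which for every pair of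
vertices at most one of the two opposite arcs is present, encoded as an irreflexive,
asymmetric adjacency relation. -/
structure OrientedGraph (V : Type) where
  Adj : V → V → Prop
  irrefl : ∀ v, ¬ Adj v v
  asymm : ∀ u v, Adj u v → ¬ Adj v u

/-- `f` is a homomorphism of oriented graphs from `D` to `C` (a `C`-colouring of `D`):
it maps arcs to arcs. -/
def IsHom {V W : Type} (D : OrientedGraph V) (C : OrientedGraph W) (f : V → W) : Prop :=
  ∀ ⦃x y⦄, D.Adj x y → C.Adj (f x) (f y)

/-- The oriented graph `G` has a directed cycle of length `m`: `m` distinct vertices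
cyclically joined by arcs. -/
def HasCycleOfLength {V : Type} (G : OrientedGraph V) (m : ℕ) : Prop :=
  ∃ c : ZMod m → V, Function.Injective c ∧ ∀ i, G.Adj (c i) (c (i + 1))

/-- The girth of `G` (the length of a shortest directed cycle, infinite if none) is at
least `ℓ`: there is no directed cycle of length less than `ℓ`. -/
def GirthAtLeast {V : Type} (G : OrientedGraph V) (ℓ : ℕ) : Prop :=
  ∀ m : ℕ, 0 < m → m < ℓ → ¬ HasCycleOfLength G m

/-- The girth of `G` is exactly `ℓ`: there is a directed cycle of length `ℓ` and none
shorter. -/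
def GirthEq {V : Type} (G : OrientedGraph V) (ℓ : ℕ) : Prop :=
  HasCycleOfLength G ℓ ∧ GirthAtLeast G ℓ

/-- `f` is an automorphism of the oriented graph `D`. -/
def IsAuto {V : Type} (D : OrientedGraph V) (f : V → V) : Prop :=
  Function.Bijective f ∧ ∀ x y, D.Adj x y ↔ D.Adj (f x) (f y)

/-- `D` is a core: every homomorphism from `D` to itself is an automorphism. -/
def IsCore {V : Type} (D : OrientedGraph V) : Prop :=
  ∀ f : V → V, IsHom D D f → IsAuto D f

/-- `C` is `D`-pointed: there do not exist two distinct `C`-colourings of `D` that agree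
on all but one vertex of `D`. -/
def IsPointedOf {VC VD : Type} (C : OrientedGraph VC) (D : OrientedGraph VD) : Prop :=
  ¬ ∃ f g : VD → VC, IsHom D C f ∧ IsHom D C g ∧ f ≠ g ∧
      ∃ v : VD, ∀ u : VD, u ≠ v → f u = g u

/-- `T` is a tournament: between any two distinct vertices there is an arc. -/
def IsTournament {V : Type} (T : OrientedGraph V) : Prop :=
  ∀ u v : V, u ≠ v → T.Adj u v ∨ T.Adj v u

/-- The oriented chromatic number of `D`: the minimum number of vertices of an oriented
graph `C` such that there exists a homomorphism from `D` to `C`. -/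
noncomputable def orientedChromaticNumber {V : Type} (D : OrientedGraph V) : ℕ :=
  sInf {k : ℕ | ∃ C : OrientedGraph (Fin k), ∃ f : V → Fin k, IsHom D C f}

namespace OrientedGraph

variable {U V W : Type} {D : OrientedGraph V} {E : OrientedGraph W}

lemma isHom_comp {F : OrientedGraph U} {f : V → W} {g : W → U} (hg : IsHom E F g)
    (hf : IsHom D E f) : IsHom D F (g ∘ f) :=
  fun _ _ h => hg (hf h)

lemma hasCycleOfLength_of_isHom {f : V → W} (hf : IsHom D E f) (hinj : Function.Injective f)
    {m : ℕ} : HasCycleOfLength D m → HasCycleOfLength E m :=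
  fun ⟨c, hc, hadj⟩ => ⟨f ∘ c, hinj.comp hc, fun i => hf (hadj i)⟩

section Comap

/-- The pullback of an oriented graph along a map `f` of vertex sets; for an equivalence `f` it is
an isomorphic copy. -/
def comap (D : OrientedGraph W) (f : V → W) : OrientedGraph V where
  Adj x y := D.Adj (f x) (f y)
  irrefl x := D.irrefl (f x)
  asymm x y := D.asymm (f x) (f y)

lemma isHom_comap (D : OrientedGraph W) (f : V → W) : IsHom (D.comap f) D f :=
  fun _ _ h => h

lemma isHom_comap_symm (D : OrientedGraph V) (e : V ≃ W) : IsHom D (D.comap e.symm) e :=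
  fun x y h => by simpa only [comap, e.symm_apply_apply] using h

lemma isHom_symm_comap (D : OrientedGraph W) (e : V ≃ W) : IsHom D (D.comap e) e.symm :=
  isHom_comap_symm D e.symm

lemma hasCycleOfLength_comap (D : OrientedGraph W) (e : V ≃ W) (m : ℕ) :
    HasCycleOfLength (D.comap e) m ↔ HasCycleOfLength D m :=
  ⟨hasCycleOfLength_of_isHom (isHom_comap D e) e.injective,
    hasCycleOfLength_of_isHom (isHom_symm_comap D e) e.symm.injective⟩

lemma girthEq_comap (D : OrientedGraph W) (e : V ≃ W) (ℓ : ℕ) :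
    GirthEq (D.comap e) ℓ ↔ GirthEq D ℓ := by
  simp only [GirthEq, GirthAtLeast, hasCycleOfLength_comap]

lemma orientedChromaticNumber_comap (D : OrientedGraph W) (e : V ≃ W) :
    orientedChromaticNumber (D.comap e) = orientedChromaticNumber D := by
  refine congrArg sInf (Set.ext fun k => ⟨?_, ?_⟩)
  · rintro ⟨C, f, hf⟩
    exact ⟨C, f ∘ e.symm, isHom_comp hf (isHom_symm_comap D e)⟩
  · rintro ⟨C, f, hf⟩
    exact ⟨C, f ∘ e, isHom_comp hf (isHom_comap D e)⟩

end Comap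

section ChromaticNumber

lemma exists_isHom_fin_card [Finite W] {f : V → W} (hf : IsHom D E f) :
    ∃ C : OrientedGraph (Fin (Nat.card W)), ∃ g : V → Fin (Nat.card W), IsHom D C g :=
  ⟨_, _, isHom_comp (isHom_comap_symm E (Finite.equivFin W)) hf⟩

lemma orientedChromaticNumber_le_card [Finite W] {f : V → W} (hf : IsHom D E f) :
    orientedChromaticNumber D ≤ Nat.card W :=
  Nat.sInf_le (exists_isHom_fin_card hf)

lemma exists_isHom_orientedChromaticNumber [Finite V] (D : OrientedGraph V) :
    ∃ C : OrientedGraph (Fin (orientedChromaticNumber D)),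
      ∃ f : V → Fin (orientedChromaticNumber D), IsHom D C f :=
  Nat.sInf_mem (s := {k | ∃ C : OrientedGraph (Fin k), ∃ f : V → Fin k, IsHom D C f})
    ⟨_, exists_isHom_fin_card (isHom_comap D id)⟩

/-- There is a directed path of length one or two from `u` to `v`. -/
def ReachesWithinTwo (D : OrientedGraph V) (u v : V) : Prop :=
  D.Adj u v ∨ ∃ w, D.Adj u w ∧ D.Adj w v

/-- An oriented clique: any two distinct vertices are joined, in one of the two directions, by a
directed path of length at most two. These are the oriented graphs all of whose vertices need
different colours. -/
def IsOrientedClique (D : OrientedGraph V) : Prop :=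
  ∀ u v, u ≠ v → D.ReachesWithinTwo u v ∨ D.ReachesWithinTwo v u

lemma ReachesWithinTwo.map_ne {f : V → W} (hf : IsHom D E f) {u v : V}
    (h : D.ReachesWithinTwo u v) : f u ≠ f v := by
  intro heq
  rcases h with huv | ⟨w, huw, hwv⟩
  · exact E.irrefl _ (heq ▸ hf huv)
  · exact E.asymm _ _ (hf huw) (heq ▸ hf hwv)

lemma IsOrientedClique.injective (hD : D.IsOrientedClique) {f : V → W} (hf : IsHom D E f) :
    Function.Injective f := by
  intro u v heq
  by_contra huv
  rcases hD u v huv with h | h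
  · exact h.map_ne hf heq
  · exact h.map_ne hf heq.symm

lemma IsOrientedClique.card_le_orientedChromaticNumber [Finite W] (hD : D.IsOrientedClique)
    {f : V → W} (hf : IsHom D E f) : Nat.card V ≤ orientedChromaticNumber E := by
  obtain ⟨C, g, hg⟩ := exists_isHom_orientedChromaticNumber E
  simpa using Nat.card_le_card_of_injective _ (hD.injective (isHom_comp hg hf))

end ChromaticNumber

section Sum

/-- The disjoint union of two oriented graphs. -/
def sum (D : OrientedGraph V) (E : OrientedGraph W) : OrientedGraph (V ⊕ W) where
  Adj := Sum.LiftRel D.Adj E.Adj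
  irrefl := by
    rintro _ (⟨h⟩ | ⟨h⟩)
    exacts [D.irrefl _ h, E.irrefl _ h]
  asymm := by
    rintro _ _ (⟨h⟩ | ⟨h⟩) (⟨h'⟩ | ⟨h'⟩)
    exacts [D.asymm _ _ h h', E.asymm _ _ h h']

lemma isHom_inl (D : OrientedGraph V) (E : OrientedGraph W) : IsHom D (D.sum E) Sum.inl :=
  fun _ _ => Sum.LiftRel.inl

lemma isHom_inr (D : OrientedGraph V) (E : OrientedGraph W) : IsHom E (D.sum E) Sum.inr :=
  fun _ _ => Sum.LiftRel.inr

lemma isHom_sumElim {C : OrientedGraph U} {f : V → U} {g : W → U} (hf : IsHom D C f)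
    (hg : IsHom E C g) : IsHom (D.sum E) C (Sum.elim f g) := by
  rintro _ _ (h | h)
  exacts [hf h, hg h]

lemma isLeft_eq_of_adj_sum {x y : V ⊕ W} (h : (D.sum E).Adj x y) : x.isLeft = y.isLeft := by
  cases h <;> rfl

lemma isLeft_eq_of_cycle_sum {m : ℕ} {c : ZMod m → V ⊕ W}
    (hc : ∀ i, (D.sum E).Adj (c i) (c (i + 1))) (i : ZMod m) : (c i).isLeft = (c 0).isLeft := by
  have hper : Function.Periodic (fun i => (c i).isLeft) 1 :=
    fun i => (isLeft_eq_of_adj_sum (hc i)).symm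
  obtain ⟨n, rfl⟩ := ZMod.intCast_surjective i
  simpa only [mul_one] using hper.int_mul_eq n

lemma hasCycleOfLength_sum {m : ℕ} :
    HasCycleOfLength (D.sum E) m ↔ HasCycleOfLength D m ∨ HasCycleOfLength E m := by
  constructor
  · rintro ⟨c, hinj, hc⟩
    have hside := isLeft_eq_of_cycle_sum hc
    cases h0 : (c 0).isLeft with
    | true =>
      choose d hd using fun i => Sum.isLeft_iff.mp ((hside i).trans h0)
      obtain rfl : c = Sum.inl ∘ d := funext hd
      exact .inl ⟨d, hinj.of_comp, fun i => Sum.liftRel_inl_inl.mp (hc i)⟩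
    | false =>
      choose d hd using fun i => Sum.isRight_iff.mp (Sum.isLeft_eq_false.mp ((hside i).trans h0))
      obtain rfl : c = Sum.inr ∘ d := funext hd
      exact .inr ⟨d, hinj.of_comp, fun i => Sum.liftRel_inr_inr.mp (hc i)⟩
  · rintro (h | h)
    · exact hasCycleOfLength_of_isHom (isHom_inl D E) Sum.inl_injective h
    · exact hasCycleOfLength_of_isHom (isHom_inr D E) Sum.inr_injective h

lemma girthEq_sum {ℓ : ℕ} (hD : GirthAtLeast D ℓ) (hE : GirthEq E ℓ) : GirthEq (D.sum E) ℓ :=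
  ⟨hasCycleOfLength_sum.mpr (.inr hE.1), fun m hm hmℓ h =>
    (hasCycleOfLength_sum.mp h).elim (hD m hm hmℓ) (hE.2 m hm hmℓ)⟩

end Sum

lemma girthAtLeast_of_adj_imp_lt {α : Type*} [Preorder α] {r : V → α}
    (hr : ∀ x y, D.Adj x y → r x < r y) (ℓ : ℕ) : GirthAtLeast D ℓ := by
  rintro m hm - ⟨c, -, hc⟩
  have hmono : StrictMono fun n : ℕ => r (c n) :=
    strictMono_nat_of_lt_succ fun n => by simpa only [Nat.cast_succ] using hr _ _ (hc n)
  simpa using hmono hm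

section DirectedCycle

variable (ℓ : ℕ) [Fact (2 < ℓ)]

/-- The directed cycle of length `ℓ`; for `ℓ = 1` and `ℓ = 2` the successor relation of `ZMod ℓ` is
not asymmetric. -/
def directedCycle : OrientedGraph (ZMod ℓ) where
  Adj i j := j = i + 1
  irrefl i h := by
    have : Fact (1 < ℓ) := ⟨Nat.one_lt_two.trans Fact.out⟩
    exact one_ne_zero (left_eq_add.mp h)
  asymm i j hij hji := by
    have h : (1 + 1 : ZMod ℓ) = 0 := by rwa [hij, add_assoc, left_eq_add] at hji
    exact ZMod.neg_one_ne_one (neg_eq_of_add_eq_zero_left h)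

lemma girthEq_directedCycle : GirthEq (directedCycle ℓ) ℓ := by
  refine ⟨⟨id, Function.injective_id, fun _ => rfl⟩, ?_⟩
  rintro m hm hmℓ ⟨c, -, hc⟩
  have htranslate (n : ℕ) : c n = c 0 + n := by
    induction n with
    | zero => simp
    | succ n ih => rw [Nat.cast_succ, hc n, ih, Nat.cast_succ, add_assoc]
  have hzero : (m : ZMod ℓ) = 0 := by simpa using htranslate m
  exact Nat.not_dvd_of_pos_of_lt hm hmℓ ((ZMod.natCast_eq_zero_iff m ℓ).mp hzero)

variable {ℓ}

lemma isHom_directedCycle_of_closedWalk {w : ℕ → V} (hclosed : w ℓ = w 0)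
    (hw : ∀ i < ℓ, D.Adj (w i) (w (i + 1))) :
    IsHom (directedCycle ℓ) D (fun i => w i.val) := by
  have : NeZero ℓ := ⟨by have := Fact.out (p := 2 < ℓ); omega⟩
  have : Fact (1 < ℓ) := ⟨Nat.one_lt_two.trans Fact.out⟩
  rintro i _ rfl
  have hstep := hw i.val i.val_lt
  change D.Adj (w i.val) (w (i + 1).val)
  rcases Nat.lt_or_eq_of_le (Nat.add_one_le_of_lt i.val_lt) with hlt | heq
  · rwa [ZMod.val_add_of_lt (by rwa [ZMod.val_one]), ZMod.val_one]
  · rw [ZMod.val_add, ZMod.val_one, heq, Nat.mod_self]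
    rwa [heq, hclosed] at hstep

end DirectedCycle

section Tournament

variable (k : ℕ)

/-- The transitive tournament on `k` vertices with the arc from its source `0` to its sink `k - 1`
deleted: the acyclic graph that forces `k` colours. -/
def transitiveDelete : OrientedGraph (Fin k) where
  Adj i j := i < j ∧ ¬ (i.val = 0 ∧ j.val + 1 = k)
  irrefl _ h := lt_irrefl _ h.1
  asymm _ _ h h' := lt_asymm h.1 h'.1

/-- The transitive tournament on `k` vertices with the arc between its source `0` and its sink
`k - 1` reversed: the graph of colours. The condition `j < i` only matters for `k = 1`, where source
and sink coincide. -/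
def transitiveReverse : OrientedGraph (Fin k) where
  Adj i j := (transitiveDelete k).Adj i j ∨ j < i ∧ j.val = 0 ∧ i.val + 1 = k
  irrefl i h := h.elim ((transitiveDelete k).irrefl i) fun h => lt_irrefl i h.1
  asymm i j := by
    simp only [transitiveDelete, Fin.lt_def]
    omega

lemma girthAtLeast_transitiveDelete (ℓ : ℕ) : GirthAtLeast (transitiveDelete k) ℓ :=
  girthAtLeast_of_adj_imp_lt (D := transitiveDelete k) (r := id) (fun _ _ h => h.1) ℓ

lemma isHom_transitiveDelete_transitiveReverse :
    IsHom (transitiveDelete k) (transitiveReverse k) id :=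
  fun _ _ => Or.inl

variable {k}

lemma isOrientedClique_transitiveDelete (hk : 3 ≤ k) : (transitiveDelete k).IsOrientedClique := by
  have reaches_of_lt {i j : Fin k} (hij : i < j) : (transitiveDelete k).ReachesWithinTwo i j := by
    by_cases hends : i.val = 0 ∧ j.val + 1 = k
    · refine .inr ⟨⟨1, by omega⟩, ?_, ?_⟩ <;> simp only [transitiveDelete, Fin.lt_def] <;> omega
    · exact .inl ⟨hij, hends⟩
  exact fun i j hij => (lt_or_gt_of_ne hij).imp reaches_of_lt reaches_of_lt

lemma exists_closedWalk_transitiveReverse (hk : 5 ≤ k) {ℓ : ℕ} (hℓ : 3 ≤ ℓ) :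
    ∃ w : ℕ → Fin k, w ℓ = w 0 ∧ ∀ i < ℓ, (transitiveReverse k).Adj (w i) (w (i + 1)) := by
  -- One circuit `0, 1, …, r + 1, k - 1` of length `r + 3`, where `r = ℓ % 3`, and then the triangle
  -- `0, 1, k - 1` repeatedly.
  let r := ℓ % 3
  let w (i : ℕ) : ℕ :=
    if i < r + 2 then i else if (i - r) % 3 = 2 then k - 1 else (i - r) % 3
  have hwk (i : ℕ) : w i < k := by grind
  refine ⟨fun i => ⟨w i, hwk i⟩, ?_, fun i _ => ?_⟩
  · simp only [Fin.mk.injEq, w, r]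
    split_ifs <;> omega
  · simp only [transitiveReverse, transitiveDelete, Fin.lt_def, w, r]
    split_ifs <;> omega

lemma exists_isHom_directedCycle_transitiveReverse (hk : 5 ≤ k) (ℓ : ℕ) [hℓ : Fact (2 < ℓ)] :
    ∃ f, IsHom (directedCycle ℓ) (transitiveReverse k) f :=
  have ⟨_, hclosed, hw⟩ := exists_closedWalk_transitiveReverse hk hℓ.out
  ⟨_, isHom_directedCycle_of_closedWalk hclosed hw⟩

end Tournament

end OrientedGraph

open OrientedGraph

/-- **Theorem 4 (construction).** For all integers `k ≥ 5` and `ℓ ≥ 3`, there exists a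
finite oriented graph `D` with oriented chromatic number exactly `k` and girth exactly
`ℓ`. -/
theorem exists_orientedGraph_chromatic_girth (k ℓ : ℕ) (hk : 5 ≤ k) (hℓ : 3 ≤ ℓ) :
    ∃ (m : ℕ) (D : OrientedGraph (Fin m)),
      orientedChromaticNumber D = k ∧ GirthEq D ℓ := by
  have : Fact (2 < ℓ) := ⟨hℓ⟩
  have : NeZero ℓ := ⟨by omega⟩
  let D := (transitiveDelete k).sum (directedCycle ℓ)
  have hlower : k ≤ orientedChromaticNumber D := by
    simpa using (isOrientedClique_transitiveDelete (by omega)).card_le_orientedChromaticNumber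
      (isHom_inl (transitiveDelete k) (directedCycle ℓ))
  have hupper : orientedChromaticNumber D ≤ k := by
    obtain ⟨f, hf⟩ := exists_isHom_directedCycle_transitiveReverse hk ℓ
    simpa using orientedChromaticNumber_le_card
      (isHom_sumElim (isHom_transitiveDelete_transitiveReverse k) hf)
  have hgirth : GirthEq D ℓ :=
    girthEq_sum (girthAtLeast_transitiveDelete k ℓ) (girthEq_directedCycle ℓ)
  let e := (Finite.equivFin (Fin k ⊕ ZMod ℓ)).symm
  exact ⟨_, D.comap e, (orientedChromaticNumber_comap D e).trans (hupper.antisymm hlower),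
    (girthEq_comap D e ℓ).mpr hgirth⟩
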